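/- Every length-three reflection factorization of a Coxeter element of G4 has, in its Hurwitz orbit, a factorization with two consecutive equal entries (i.e., a factorization (s₁,s₂,s₃) with s_i = s_{i+1} for some i). -/

import Mathlib

noncomputable section

open Matrix Complex

/-- The `i`-th Hurwitz move on length-`k` tuples of group elements. -/
def IsHurwitzMove {G : Type*} [Group G] {k : ℕ} (t t' : Fin k → G) : Prop :=
  ∃ i : ℕ, ∃ h : i + 1 < k,
    t' ⟨i, Nat.lt_of_succ_lt h⟩ = t ⟨i + 1, h⟩ ∧
    t' ⟨i + 1, h⟩ = (t ⟨i + 1, h⟩)⁻¹ * t ⟨i, Nat.lt_of_succ_lt h⟩ * t ⟨i + 1, h⟩ ∧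
    ∀ j : Fin k, (j : ℕ) ≠ i → (j : ℕ) ≠ i + 1 → t' j = t j

/-- Two tuples lie in the same Hurwitz orbit. -/
def SameHurwitzOrbit {G : Type*} [Group G] {k : ℕ} (t t' : Fin k → G) : Prop :=
  Relation.EqvGen IsHurwitzMove t t'

/-- A group element `r` appears (as an entry) in the Hurwitz orbit of the tuple `t`. -/
def Appears {G : Type*} [Group G] {k : ℕ} (r : G) (t : Fin k → G) : Prop :=
  ∃ s : Fin k → G, SameHurwitzOrbit t s ∧ ∃ j, s j = r

/-- A tuple has two consecutive equal entries. -/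
def HasConsecutiveEqualPair {G : Type*} [Group G] {k : ℕ} (t : Fin k → G) : Prop :=
  ∃ i : ℕ, ∃ h : i + 1 < k, t ⟨i, Nat.lt_of_succ_lt h⟩ = t ⟨i + 1, h⟩

/-- Replace the `p`-th entry of a tuple by two consecutive copies of its square. -/
def doubleAt {G : Type*} [Group G] {m : ℕ} (t : Fin m → G) (p : Fin m) : Fin (m + 1) → G :=
  fun j =>
    if h1 : (j : ℕ) < (p : ℕ) then t ⟨j, h1.trans p.isLt⟩
    else if h2 : (j : ℕ) ≤ (p : ℕ) + 1 then (t p) ^ 2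
    else t ⟨(j : ℕ) - 1, by have := j.isLt; omega⟩

/-- `ω = e^(2πi/3)`. -/
def ω : ℂ := Complex.exp (2 * Real.pi * Complex.I / 3)

def AMat : Matrix (Fin 2) (Fin 2) ℂ := !![1, 0; 0, ω]

def BMat : Matrix (Fin 2) (Fin 2) ℂ :=
  !![(ω - ω ^ 2) / 3, ω ^ 2; (-2 * ω ^ 2) / 3, (-ω - 2 * ω ^ 2) / 3]

/-- The complex reflection group G₄ as the subgroup of GL(2,ℂ) generated by `AMat`, `BMat`. -/
def G4 : Subgroup (GL (Fin 2) ℂ) :=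
  Subgroup.closure {g : GL (Fin 2) ℂ |
    (g : Matrix (Fin 2) (Fin 2) ℂ) = AMat ∨ (g : Matrix (Fin 2) (Fin 2) ℂ) = BMat}

/-- The matrix underlying an element of G₄. -/
def mat (t : G4) : Matrix (Fin 2) (Fin 2) ℂ := ((t : GL (Fin 2) ℂ) : Matrix (Fin 2) (Fin 2) ℂ)

/-- A reflection in G₄: a non-identity element with eigenvalue 1. -/
def IsReflection (t : G4) : Prop := t ≠ 1 ∧ (mat t - 1).det = 0

/-- The conjugacy class R₁ of reflections of determinant ω. -/
def R1 : Set G4 := {t | IsReflection t ∧ (mat t).det = ω}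

/-- The conjugacy class R₂ of reflections of determinant ω². -/
def R2 : Set G4 := {t | IsReflection t ∧ (mat t).det = ω ^ 2}

/-- A Coxeter element of G₄: an element with a primitive 6th root of unity as eigenvalue. -/
def IsCoxeter (c : G4) : Prop :=
  ∃ ζ : ℂ, IsPrimitiveRoot ζ 6 ∧ (mat c - ζ • (1 : Matrix (Fin 2) (Fin 2) ℂ)).det = 0

/-- The relators of G₅: a³, b³, abab(baba)⁻¹. -/
def g5Rels : Set (FreeGroup (Fin 2)) :=
  {FreeGroup.of 0 ^ 3, FreeGroup.of 1 ^ 3,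
    FreeGroup.of 0 * FreeGroup.of 1 * FreeGroup.of 0 * FreeGroup.of 1 *
      (FreeGroup.of 1 * FreeGroup.of 0 * FreeGroup.of 1 * FreeGroup.of 0)⁻¹}

/-- The complex reflection group G₅, by its presentation ⟨a,b | a³ = b³ = 1, abab = baba⟩. -/
abbrev G5 := PresentedGroup g5Rels

def ga : G5 := PresentedGroup.of 0
def gb : G5 := PresentedGroup.of 1

/-- The conjugacy class of `a` in G₅. -/
def S1 : Set G5 := {t | IsConj ga t}
/-- The conjugacy class of `b` in G₅. -/
def S2 : Set G5 := {t | IsConj gb t}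
/-- The conjugacy class of `a²` in G₅. -/
def S3 : Set G5 := {t | IsConj (ga ^ 2) t}
/-- The conjugacy class of `b²` in G₅. -/
def S4 : Set G5 := {t | IsConj (gb ^ 2) t}

/-- A reflection in G₅: a conjugate of a, b, a², or b². -/
def IsReflection5 (t : G5) : Prop := t ∈ S1 ∨ t ∈ S2 ∨ t ∈ S3 ∨ t ∈ S4

/-- A Coxeter element of G₅: an element of order 12. -/
def IsCoxeter5 (c : G5) : Prop := orderOf c = 12

/-!
Up to Hurwitz moves two of the three reflections, `a` and `b`, come first and have the same
determinant `δ`, and the third is `d⁻¹` with `det d = δ`. If `a = b` we are done; otherwise the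
claim is that `d b d⁻¹ = a`, so that `(a, b, d⁻¹)` moves to `(a, d⁻¹, a)` and then to
`(a d⁻¹ a⁻¹, a, a)`.

To see this without listing `G4`, note that `G4` preserves the Hermitian form `2|x|² + 3|y|²` and
fixes, modulo `2`, a vector of an invariant lattice over the Eisenstein integers. The second fact
makes `det (g - 1)` even; together with positivity it shows that an element of determinant `1` is
`1`, `-1` or of trace `0`. Hence distinct reflections of determinant `δ` satisfy `tr (a b⁻¹) = 0`,
and a Coxeter element `a b d⁻¹` has trace `-(1 + δ)`. Now the Cayley–Hamilton identities give
`tr (a⁻¹ d b d⁻¹) = 2`, which forces `a⁻¹ d b d⁻¹ = 1`.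
-/

section Hurwitz

variable {G : Type*} [Group G]

/-- The Hurwitz orbit of `t` contains a tuple with two consecutive equal entries. -/
def HurwitzReachesPair {k : ℕ} (t : Fin k → G) : Prop :=
  ∃ s : Fin k → G, SameHurwitzOrbit t s ∧ HasConsecutiveEqualPair s

theorem HurwitzReachesPair.of_sameHurwitzOrbit {k : ℕ} {t t' : Fin k → G}
    (h : SameHurwitzOrbit t t') (ht' : HurwitzReachesPair t') : HurwitzReachesPair t :=
  let ⟨s, hs, hpair⟩ := ht'
  ⟨s, h.trans _ _ _ hs, hpair⟩

theorem sameHurwitzOrbit_swap_left (a b c : G) :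
    SameHurwitzOrbit ![a, b, c] ![b, b⁻¹ * a * b, c] := by
  refine .rel _ _ ⟨0, by norm_num, rfl, rfl, fun j hj hj' => ?_⟩
  fin_cases j <;> simp_all

theorem sameHurwitzOrbit_swap_right (a b c : G) :
    SameHurwitzOrbit ![a, b, c] ![a, c, c⁻¹ * b * c] := by
  refine .rel _ _ ⟨1, by norm_num, rfl, rfl, fun j hj hj' => ?_⟩
  fin_cases j <;> simp_all

theorem hurwitzReachesPair_of_mul_eq_mul {a b c : G} (h : b * c = c * a) :
    HurwitzReachesPair ![a, b, c] := by
  have to_outer_pair : SameHurwitzOrbit ![a, b, c] ![a, c, a] := by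
    simpa [mul_assoc, h] using sameHurwitzOrbit_swap_right a b c
  have from_adjacent_pair : SameHurwitzOrbit ![a * c * a⁻¹, a, a] ![a, c, a] := by
    simpa [mul_assoc] using sameHurwitzOrbit_swap_left (a * c * a⁻¹) a a
  exact ⟨_, to_outer_pair.trans _ _ _ (from_adjacent_pair.symm _ _), 1, by norm_num, rfl⟩

end Hurwitz

section TwoByTwo

variable {R : Type*} [CommRing R]

theorem det_sub_smul_one_fin_two (M : Matrix (Fin 2) (Fin 2) R) (x : R) :
    (M - x • (1 : Matrix (Fin 2) (Fin 2) R)).det = x ^ 2 - M.trace * x + M.det := by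
  simp only [det_fin_two, trace_fin_two, Matrix.sub_apply, Matrix.smul_apply, one_apply_eq,
    smul_eq_mul, mul_one, ne_eq, zero_ne_one, one_ne_zero, not_false_eq_true, one_apply_ne,
    mul_zero, sub_zero]
  ring

theorem det_sub_one_fin_two (M : Matrix (Fin 2) (Fin 2) R) :
    (M - 1).det = 1 - M.trace + M.det := by
  simpa using det_sub_smul_one_fin_two M 1

theorem mul_self_fin_two (M : Matrix (Fin 2) (Fin 2) R) :
    M * M = M.trace • M - M.det • (1 : Matrix (Fin 2) (Fin 2) R) := by
  ext i j
  fin_cases i <;> fin_cases j <;> simp [mul_apply, det_fin_two, trace_fin_two] <;> ring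

theorem mul_add_mul_swap_fin_two (M N : Matrix (Fin 2) (Fin 2) R) :
    M * N + N * M = M.trace • N + N.trace • M +
      ((M * N).trace - M.trace * N.trace) • (1 : Matrix (Fin 2) (Fin 2) R) := by
  ext i j
  fin_cases i <;> fin_cases j <;> simp [mul_apply, trace_fin_two] <;> ring

end TwoByTwo

section CubicReflection

variable {R : Type*} [CommRing R] {δ : R} {a b d : Matrix (Fin 2) (Fin 2) R}

/-- A `2 × 2` matrix with the characteristic polynomial `(X - 1) (X - δ)` of a reflection of order
three, where `δ` is a root of `X² + X + 1`. -/
structure IsCubicReflection (δ : R) (M : Matrix (Fin 2) (Fin 2) R) : Prop where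
  root : δ ^ 2 + δ + 1 = 0
  trace_eq : M.trace = 1 + δ
  det_eq : M.det = δ

namespace IsCubicReflection

theorem mul_self (ha : IsCubicReflection δ a) :
    a * a = -δ ^ 2 • a - δ • (1 : Matrix (Fin 2) (Fin 2) R) := by
  rw [mul_self_fin_two, ha.trace_eq, ha.det_eq, eq_neg_of_add_eq_zero_right
    (by linear_combination ha.root : δ ^ 2 + (1 + δ) = 0)]

theorem mul_self_mul_self (ha : IsCubicReflection δ a) : a * (a * a) = 1 := by
  have hδ := ha.root
  rw [ha.mul_self, mul_sub, mul_smul_comm, ha.mul_self]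
  ext i j
  fin_cases i <;> fin_cases j <;> simp <;> grind

theorem trace_mul_self (ha : IsCubicReflection δ a) : (a * a).trace = -δ := by
  rw [ha.mul_self]
  simp only [neg_smul, trace_sub, trace_neg, trace_smul, ha.trace_eq, smul_eq_mul, trace_one,
    Fintype.card_fin, Nat.cast_ofNat]
  linear_combination -δ * ha.root

theorem trace_mul_mul_self (hb : IsCubicReflection δ b) (M : Matrix (Fin 2) (Fin 2) R) :
    (M * (b * b)).trace = -δ ^ 2 * (M * b).trace - δ * M.trace := by
  simp [hb.mul_self, mul_sub]

theorem trace_mul_self_mul (ha : IsCubicReflection δ a) (M : Matrix (Fin 2) (Fin 2) R) :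
    (a * a * M).trace = -δ ^ 2 * (a * M).trace - δ * M.trace := by
  simp [ha.mul_self, sub_mul]

theorem trace_mul_eq (ha : IsCubicReflection δ a) (hb : IsCubicReflection δ b)
    (h : (a * (b * b)).trace = 0) : (a * b).trace = δ := by
  rw [hb.trace_mul_mul_self, ha.trace_eq] at h
  linear_combination -δ * h + ((1 - δ) * (a * b).trace - δ) * ha.root

theorem trace_mul_mul_self_eq_zero (ha : IsCubicReflection δ a) (hb : IsCubicReflection δ b)
    (h : (a * b).trace = δ) : (a * (b * b)).trace = 0 := by
  rw [hb.trace_mul_mul_self, h, ha.trace_eq]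
  linear_combination -δ * ha.root

theorem mul_add_mul_swap (ha : IsCubicReflection δ a) (hb : IsCubicReflection δ b)
    (h : (a * b).trace = δ) : a * b + b * a = -δ ^ 2 • (a + b) := by
  have trace_eq_neg_sq : 1 + δ = -δ ^ 2 := by linear_combination ha.root
  have constant_term : δ - (1 + δ) * (1 + δ) = 0 := by linear_combination -ha.root
  rw [mul_add_mul_swap_fin_two, h, ha.trace_eq, hb.trace_eq, constant_term, trace_eq_neg_sq]
  module

theorem mul_mul_self_eq (hd : IsCubicReflection δ d) (hb : IsCubicReflection δ b)
    (h : (d * b).trace = δ) : d * b * d = -δ ^ 2 • (d * d) + δ • b := by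
  calc d * b * d = d * (d * b + b * d) - d * d * b := by noncomm_ring
    _ = d * (-δ ^ 2 • (d + b)) - (-δ ^ 2 • d - δ • (1 : Matrix (Fin 2) (Fin 2) R)) * b := by
      rw [hd.mul_add_mul_swap hb h, hd.mul_self]
    _ = -δ ^ 2 • (d * d) + δ • b := by
      simp only [mul_smul_comm, mul_add, sub_mul, smul_mul_assoc, one_mul]
      module

theorem conj_eq (hd : IsCubicReflection δ d) (hb : IsCubicReflection δ b)
    (h : (d * b).trace = δ) :
    d * b * (d * d) = -(d + b) - δ ^ 2 • (1 : Matrix (Fin 2) (Fin 2) R) - δ • (d * b) := by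
  have cube : δ ^ 3 = 1 := by linear_combination (δ - 1) * hd.root
  calc d * b * (d * d)
      = d * b * (-δ ^ 2 • d - δ • (1 : Matrix (Fin 2) (Fin 2) R)) := by rw [hd.mul_self]
    _ = -δ ^ 2 • (d * b * d) - δ • (d * b) := by
      rw [mul_sub, mul_smul_comm, mul_smul_comm, mul_one]
    _ = -δ ^ 2 • (-δ ^ 2 • (-δ ^ 2 • d - δ • (1 : Matrix (Fin 2) (Fin 2) R)) + δ • b)
        - δ • (d * b) := by rw [hd.mul_mul_self_eq hb h, hd.mul_self]
    _ = -δ ^ 3 • (δ ^ 3 • d + δ ^ 2 • (1 : Matrix (Fin 2) (Fin 2) R) + b) - δ • (d * b) := by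
      module
    _ = _ := by
      rw [cube]
      module

theorem trace_mul_conj_eq_two (ha : IsCubicReflection δ a) (hb : IsCubicReflection δ b)
    (hd : IsCubicReflection δ d) (hab : (a * b).trace = δ) (had : (a * d).trace = δ)
    (hbd : (b * d).trace = δ) (habd : (a * b * (d * d)).trace = -(1 + δ)) :
    (a * a * (d * b * (d * d))).trace = 2 := by
  have hdb : (d * b).trace = δ := by rwa [trace_mul_comm]
  have trace_bad : (b * a * (d * d)).trace = 1 + δ := by
    have hsum := congrArg (fun M => (M * (d * d)).trace) (ha.mul_add_mul_swap hb hab)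
    simp only [add_mul, smul_mul_assoc, trace_add, trace_smul, smul_eq_mul, habd,
      ha.trace_mul_mul_self_eq_zero hd had, hb.trace_mul_mul_self_eq_zero hd hbd] at hsum
    linear_combination hsum
  have trace_aadb : (a * a * (d * b)).trace = 1 + δ := by
    have cyclic : (b * a * d).trace = (a * (d * b)).trace := by
      rw [mul_assoc, trace_mul_comm, mul_assoc]
    rw [hd.trace_mul_mul_self, cyclic, trace_mul_comm b a, hab] at trace_bad
    rw [ha.trace_mul_self_mul, hdb, trace_bad]
  have trace_aad : (a * a * d).trace = 0 := by
    rw [trace_mul_comm]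
    exact hd.trace_mul_mul_self_eq_zero ha (by rwa [trace_mul_comm])
  have trace_aab : (a * a * b).trace = 0 := by
    rw [trace_mul_comm]
    exact hb.trace_mul_mul_self_eq_zero ha (by rwa [trace_mul_comm])
  rw [hd.conj_eq hb hdb]
  simp only [mul_sub, mul_add, mul_neg, mul_smul_comm, mul_one, trace_sub, trace_add, trace_neg,
    trace_smul, smul_eq_mul, trace_aad, trace_aab, trace_aadb, ha.trace_mul_self]
  linear_combination (δ - 2) * ha.root

end IsCubicReflection

end CubicReflection

section Isometry

variable {n R : Type*} [Fintype n] [DecidableEq n] [CommRing R] [StarRing R] {H M : Matrix n n R}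

/-- The matrices `M` preserving the sesquilinear form `x, y ↦ xᴴ H y`. -/
def isometryMonoid (H : Matrix n n R) : Submonoid (Matrix n n R) where
  carrier := {M | Mᴴ * H * M = H}
  one_mem' := by simp
  mul_mem' {M N} hM hN := by
    calc (M * N)ᴴ * H * (M * N) = Nᴴ * (Mᴴ * H * M) * N := by
          simp only [conjTranspose_mul, Matrix.mul_assoc]
      _ = Nᴴ * H * N := congrArg (Nᴴ * · * N) hM
      _ = H := hN

theorem mem_isometryMonoid_iff : M ∈ isometryMonoid H ↔ Mᴴ * H * M = H :=
  Iff.rfl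

theorem neg_mem_isometryMonoid (hM : M ∈ isometryMonoid H) : -M ∈ isometryMonoid H := by
  simpa [mem_isometryMonoid_iff] using hM

theorem conjTranspose_mul_eq_mul_adjugate (hM : M ∈ isometryMonoid H) (hdet : M.det = 1) :
    Mᴴ * H = H * M.adjugate := by
  calc Mᴴ * H = Mᴴ * H * M * M.adjugate := by
        rw [Matrix.mul_assoc, mul_adjugate, hdet, one_smul, Matrix.mul_one]
    _ = H * M.adjugate := by rw [mem_isometryMonoid_iff.1 hM]

end Isometry

section DiagonalIsometry

variable {α β : ℝ} {M : Matrix (Fin 2) (Fin 2) ℂ}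

theorem trace_eq_two_re_of_mem_isometryMonoid (hα : α ≠ 0)
    (hM : M ∈ isometryMonoid !![(α : ℂ), 0; 0, (β : ℂ)]) (hdet : M.det = 1) :
    M.trace = 2 * (M 0 0).re := by
  have hadj := congrFun₂ (conjTranspose_mul_eq_mul_adjugate hM hdet) 0 0
  have h11 : M 1 1 = star (M 0 0) := by
    simpa [mul_apply, adjugate_fin_two, mul_comm, hα, eq_comm] using hadj
  rw [trace_fin_two, h11]
  exact_mod_cast Complex.add_conj (M 0 0)

theorem normSq_add_normSq_of_mem_isometryMonoid
    (hM : M ∈ isometryMonoid !![(α : ℂ), 0; 0, (β : ℂ)]) :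
    α * normSq (M 0 0) + β * normSq (M 1 0) = α := by
  have h00 := congrFun₂ (mem_isometryMonoid_iff.1 hM) 0 0
  simp only [mul_apply, conjTranspose_apply, RCLike.star_def, of_apply, cons_val', cons_val_fin_one,
    Fin.sum_univ_two, cons_val_zero, cons_val_one, mul_zero, add_zero, zero_add] at h00
  apply Complex.ofReal_injective
  push_cast
  rw [normSq_eq_conj_mul_self, normSq_eq_conj_mul_self]
  linear_combination h00

theorem sq_re_le_one_of_mem_isometryMonoid (hα : 0 < α) (hβ : 0 < β)
    (hM : M ∈ isometryMonoid !![(α : ℂ), 0; 0, (β : ℂ)]) : (M 0 0).re ^ 2 ≤ 1 := by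
  have hnorm := normSq_add_normSq_of_mem_isometryMonoid hM
  rw [normSq_apply (M 0 0)] at hnorm
  nlinarith [mul_nonneg hβ.le (normSq_nonneg (M 1 0)), mul_nonneg hα.le (sq_nonneg (M 0 0).im)]

theorem eq_one_of_mem_isometryMonoid (hα : 0 < α) (hβ : 0 < β)
    (hM : M ∈ isometryMonoid !![(α : ℂ), 0; 0, (β : ℂ)]) (hdet : M.det = 1)
    (hre : (M 0 0).re = 1) : M = 1 := by
  have hnorm := normSq_add_normSq_of_mem_isometryMonoid hM
  rw [normSq_apply (M 0 0), hre] at hnorm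
  have h10_nonneg := mul_nonneg hβ.le (normSq_nonneg (M 1 0))
  have him_nonneg := mul_nonneg hα.le (sq_nonneg (M 0 0).im)
  have him : (M 0 0).im = 0 := by
    have : α * (M 0 0).im ^ 2 = 0 := by nlinarith
    simpa [hα.ne'] using this
  have h10 : M 1 0 = 0 := by
    have : β * normSq (M 1 0) = 0 := by nlinarith
    simpa [hβ.ne'] using this
  have h00 : M 0 0 = 1 := Complex.ext hre him
  have hadj := conjTranspose_mul_eq_mul_adjugate hM hdet
  have h11 : M 1 1 = 1 := by simpa [det_fin_two, h00, h10] using hdet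
  have h01 : M 0 1 = 0 := by
    simpa [mul_apply, adjugate_fin_two, h10, hα.ne'] using congrFun₂ hadj 0 1
  ext i j
  fin_cases i <;> fin_cases j <;> simp [h00, h01, h10, h11]

end DiagonalIsometry

section Congruence

variable {R : Type*} [CommRing R]

/-- The `2 × 2` matrices over `R` that fix the first basis vector modulo the ideal `I`. -/
def fixingMonoid (I : Ideal R) : Submonoid (Matrix (Fin 2) (Fin 2) R) where
  carrier := {M | M 0 0 - 1 ∈ I ∧ M 1 0 ∈ I}
  one_mem' := by simp
  mul_mem' {M N} hM hN := by
    simp only [Set.mem_ofPred_eq, mul_apply, Fin.sum_univ_two] at hM hN ⊢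
    constructor
    · rw [show M 0 0 * N 0 0 + M 0 1 * N 1 0 - 1
          = M 0 0 * (N 0 0 - 1) + (M 0 0 - 1) + M 0 1 * N 1 0 by ring]
      exact I.add_mem (I.add_mem (I.mul_mem_left _ hN.1) hM.1) (I.mul_mem_left _ hN.2)
    · exact I.add_mem (I.mul_mem_right _ hM.2) (I.mul_mem_left _ hN.2)

theorem det_sub_one_mem_of_mem_fixingMonoid {I : Ideal R} {M : Matrix (Fin 2) (Fin 2) R}
    (hM : M ∈ fixingMonoid I) : (M - 1).det ∈ I := by
  rw [det_fin_two]
  simpa using I.sub_mem (I.mul_mem_right _ hM.1) (I.mul_mem_left _ hM.2)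

/-- The matrices over `S` that become, in the basis given by the columns of `P`, the image of a
matrix in `Γ` under the ring homomorphism `f`. -/
def intertwinedMonoid {S n : Type*} [CommRing S] [Fintype n] [DecidableEq n] (f : R →+* S)
    (P : Matrix n n S) (Γ : Submonoid (Matrix n n R)) : Submonoid (Matrix n n S) where
  carrier := {M | ∃ N ∈ Γ, M * P = P * f.mapMatrix N}
  one_mem' := ⟨1, Γ.one_mem, by simp⟩
  mul_mem' := by
    rintro M M' ⟨N, hN, hMN⟩ ⟨N', hN', hMN'⟩
    refine ⟨N * N', Γ.mul_mem hN hN', ?_⟩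
    rw [map_mul, Matrix.mul_assoc, hMN', ← Matrix.mul_assoc, hMN, Matrix.mul_assoc]

theorem exists_det_sub_one_eq_of_mem_intertwinedMonoid {S n : Type*} [CommRing S] [Fintype n]
    [DecidableEq n] {f : R →+* S} {P : Matrix n n S} {Γ : Submonoid (Matrix n n R)}
    (hP : IsUnit P.det) {M : Matrix n n S} (hM : M ∈ intertwinedMonoid f P Γ) :
    ∃ N ∈ Γ, (M - 1).det = f (N - 1).det := by
  obtain ⟨N, hN, hMN⟩ := hM
  refine ⟨N, hN, hP.mul_left_cancel ?_⟩
  have hsub : (M - 1) * P = P * f.mapMatrix (N - 1) := by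
    rw [sub_mul, one_mul, hMN, map_sub, map_one, mul_sub, mul_one]
  rw [RingHom.map_det, ← det_mul P (f.mapMatrix _), ← hsub, det_mul, mul_comm]

end Congruence

section Eisenstein

theorem ω_isPrimitiveRoot : IsPrimitiveRoot ω 3 := by
  simpa [ω] using Complex.isPrimitiveRoot_exp 3 (by norm_num)

theorem ω_sq_add_ω_add_one : ω ^ 2 + ω + 1 = 0 := by
  have hsum := ω_isPrimitiveRoot.geom_sum_eq_zero (by norm_num)
  simp only [Finset.sum_range_succ, Finset.sum_range_zero, pow_zero, pow_one] at hsum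
  linear_combination hsum

theorem conj_ω : starRingEnd ℂ ω = -1 - ω := by
  have hnorm : ‖ω‖ = 1 := ω_isPrimitiveRoot.norm'_eq_one (by norm_num)
  rw [← Complex.inv_eq_conj hnorm]
  exact inv_eq_of_mul_eq_one_right (by linear_combination -ω_sq_add_ω_add_one)

/-- The ring `ℤ[ω]`: the generator satisfies `ω² = -1 - ω`, and `⟨m, n⟩` stands for `m + n ω`. -/
abbrev EisensteinInt : Type := QuadraticAlgebra ℤ (-1) (-1)

/-- The embedding of the Eisenstein integers into `ℂ`. -/
def eisensteinEmbedding : EisensteinInt →ₐ[ℤ] ℂ :=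
  QuadraticAlgebra.lift ⟨ω, by
    simp only [neg_smul, one_smul]
    linear_combination ω_sq_add_ω_add_one⟩

theorem eisensteinEmbedding_apply (e : EisensteinInt) :
    eisensteinEmbedding e = e.re + e.im * ω := by
  simp [eisensteinEmbedding]

theorem normSq_eisensteinEmbedding (e : EisensteinInt) :
    normSq (eisensteinEmbedding e) = (QuadraticAlgebra.norm e : ℤ) := by
  apply Complex.ofReal_injective
  rw [normSq_eq_conj_mul_self, eisensteinEmbedding_apply, QuadraticAlgebra.norm_def]
  simp only [map_add, map_mul, conj_ω, map_intCast]
  push_cast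
  linear_combination -(e.im : ℂ) ^ 2 * ω_sq_add_ω_add_one

theorem exists_int_eq_of_eisensteinEmbedding_eq_ofReal {e : EisensteinInt} {x : ℝ}
    (h : eisensteinEmbedding e = x) : ∃ m : ℤ, x = m := by
  have hconj : starRingEnd ℂ (eisensteinEmbedding e) = eisensteinEmbedding e := by
    rw [h, Complex.conj_ofReal]
  have him_mul : (e.im : ℂ) * (1 + 2 * ω) = 0 := by
    simp only [eisensteinEmbedding_apply, map_add, map_mul, conj_ω, map_intCast] at hconj
    linear_combination -hconj
  have h_one_add_two_ω : 1 + 2 * ω ≠ 0 := fun hzero => by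
    have : (3 : ℂ) = 0 := by linear_combination 4 * ω_sq_add_ω_add_one - (1 + 2 * ω) * hzero
    norm_num at this
  have him : (e.im : ℂ) = 0 := (mul_eq_zero.1 him_mul).resolve_right h_one_add_two_ω
  refine ⟨e.re, Complex.ofReal_injective ?_⟩
  rw [← h, eisensteinEmbedding_apply, him, zero_mul, add_zero, Complex.ofReal_intCast]

end Eisenstein

section G4Invariants

theorem mat_mul (g h : G4) : mat (g * h) = mat g * mat h := rfl

theorem mat_one : mat 1 = 1 := rfl

theorem mat_injective : Function.Injective mat :=
  fun _ _ h => Subtype.ext (Units.ext h)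

theorem det_mat_mul (g h : G4) : (mat (g * h)).det = (mat g).det * (mat h).det := by
  rw [mat_mul, det_mul]

theorem det_mat_ne_zero (g : G4) : (mat g).det ≠ 0 :=
  GeneralLinearGroup.det_ne_zero (g : GL (Fin 2) ℂ)

theorem det_mat_inv (g : G4) : (mat g⁻¹).det = (mat g).det⁻¹ :=
  eq_inv_of_mul_eq_one_left <| by rw [← det_mat_mul, inv_mul_cancel, mat_one, det_one]

theorem isCubicReflection_AMat : IsCubicReflection ω AMat where
  root := ω_sq_add_ω_add_one
  trace_eq := by simp [AMat]
  det_eq := by simp [AMat]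

theorem isCubicReflection_BMat : IsCubicReflection ω BMat where
  root := ω_sq_add_ω_add_one
  trace_eq := by
    simp only [BMat, trace_fin_two_of]
    linear_combination -ω_sq_add_ω_add_one
  det_eq := by
    simp only [BMat, det_fin_two_of]
    linear_combination (8 * ω ^ 2 / 9 - ω) * ω_sq_add_ω_add_one

theorem mat_mem_of_generators_mem {S : Submonoid (Matrix (Fin 2) (Fin 2) ℂ)} (hA : AMat ∈ S)
    (hB : BMat ∈ S) (g : G4) : mat g ∈ S := by
  let generators : Set (GL (Fin 2) ℂ) :=
    {g | (g : Matrix (Fin 2) (Fin 2) ℂ) = AMat ∨ (g : Matrix (Fin 2) (Fin 2) ℂ) = BMat}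
  have finite_order : ∀ g ∈ generators, IsOfFinOrder g := by
    rintro g (hg | hg) <;> refine isOfFinOrder_iff_pow_eq_one.2 ⟨3, by norm_num, Units.ext ?_⟩
    · simpa [hg, pow_succ', mul_assoc] using isCubicReflection_AMat.mul_self_mul_self
    · simpa [hg, pow_succ', mul_assoc] using isCubicReflection_BMat.mul_self_mul_self
  have generated : (g : GL (Fin 2) ℂ) ∈ Submonoid.closure generators := by
    rw [← Subgroup.closure_toSubmonoid_of_isOfFinOrder finite_order]
    exact g.2
  suffices Submonoid.closure generators ≤ S.comap (Units.coeHom _) from this generated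
  rw [Submonoid.closure_le]
  rintro g (hg | hg)
  · simpa [hg] using hA
  · simpa [hg] using hB

theorem det_mat_pow_three (g : G4) : (mat g).det ^ 3 = 1 := by
  let cubeDet : Matrix (Fin 2) (Fin 2) ℂ →* ℂ := (powMonoidHom 3).comp Matrix.detMonoidHom
  have mem_of_det_eq {M : Matrix (Fin 2) (Fin 2) ℂ} (hM : M.det = ω) :
      M ∈ MonoidHom.mker cubeDet := by
    simp [MonoidHom.mem_mker, cubeDet, hM, ω_isPrimitiveRoot.pow_eq_one]
  exact mat_mem_of_generators_mem (mem_of_det_eq isCubicReflection_AMat.det_eq)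
    (mem_of_det_eq isCubicReflection_BMat.det_eq) g

theorem AMat_mem_isometryMonoid :
    AMat ∈ isometryMonoid !![((2 : ℝ) : ℂ), 0; 0, ((3 : ℝ) : ℂ)] := by
  have hω := ω_sq_add_ω_add_one
  rw [mem_isometryMonoid_iff]
  ext i j
  fin_cases i <;> fin_cases j <;> simp [AMat, mul_apply, conj_ω]
  grind

theorem BMat_mem_isometryMonoid :
    BMat ∈ isometryMonoid !![((2 : ℝ) : ℂ), 0; 0, ((3 : ℝ) : ℂ)] := by
  have hω := ω_sq_add_ω_add_one
  rw [mem_isometryMonoid_iff]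
  ext i j
  fin_cases i <;> fin_cases j <;> simp [BMat, mul_apply, conj_ω, Complex.conj_ofNat] <;> grind

theorem mat_mem_isometryMonoid (g : G4) :
    mat g ∈ isometryMonoid !![((2 : ℝ) : ℂ), 0; 0, ((3 : ℝ) : ℂ)] :=
  mat_mem_of_generators_mem AMat_mem_isometryMonoid BMat_mem_isometryMonoid g

/-- A basis, in columns, of a lattice over `ℤ[ω]` which `G4` preserves and whose first basis vector
`G4` fixes modulo `2`. -/
def latticeBasis : Matrix (Fin 2) (Fin 2) ℂ := !![1, 0; (2 - 2 * ω) / 3, 1]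

theorem AMat_mem_intertwinedMonoid :
    AMat ∈ intertwinedMonoid (eisensteinEmbedding : EisensteinInt →+* ℂ) latticeBasis
      (fixingMonoid (Ideal.span {2})) := by
  have hω := ω_sq_add_ω_add_one
  refine ⟨!![⟨1, 0⟩, ⟨0, 0⟩; ⟨0, 2⟩, ⟨0, 1⟩], ⟨?_, ?_⟩, ?_⟩
  · exact Ideal.mem_span_singleton.2 ⟨0, by ext <;> rfl⟩
  · exact Ideal.mem_span_singleton.2 ⟨⟨0, 1⟩, by ext <;> rfl⟩
  · ext i j
    fin_cases i <;> fin_cases j <;>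
      simp [AMat, latticeBasis, mul_apply, eisensteinEmbedding_apply]
    grind

theorem BMat_mem_intertwinedMonoid :
    BMat ∈ intertwinedMonoid (eisensteinEmbedding : EisensteinInt →+* ℂ) latticeBasis
      (fixingMonoid (Ideal.span {2})) := by
  have hω := ω_sq_add_ω_add_one
  refine ⟨!![⟨-1, 0⟩, ⟨-1, -1⟩; ⟨2, 0⟩, ⟨2, 1⟩], ⟨?_, ?_⟩, ?_⟩
  · exact Ideal.mem_span_singleton.2 ⟨-1, by ext <;> rfl⟩
  · exact Ideal.mem_span_singleton.2 ⟨1, by ext <;> rfl⟩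
  · ext i j
    fin_cases i <;> fin_cases j <;>
      simp [BMat, latticeBasis, mul_apply, eisensteinEmbedding_apply] <;> grind

theorem exists_det_mat_sub_one_eq (g : G4) :
    ∃ e : EisensteinInt, (mat g - 1).det = 2 * eisensteinEmbedding e := by
  obtain ⟨N, hN, hdet⟩ := exists_det_sub_one_eq_of_mem_intertwinedMonoid
    (by simp [latticeBasis])
    (mat_mem_of_generators_mem AMat_mem_intertwinedMonoid BMat_mem_intertwinedMonoid g)
  obtain ⟨e, he⟩ := Ideal.mem_span_singleton.1 (det_sub_one_mem_of_mem_fixingMonoid hN)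
  refine ⟨e, ?_⟩
  rw [hdet, he, RingHom.coe_coe, map_mul, map_ofNat]

theorem mat_eq_one_or_neg_one_or_trace_eq_zero {g : G4} (hdet : (mat g).det = 1) :
    mat g = 1 ∨ mat g = -1 ∨ (mat g).trace = 0 := by
  have hiso := mat_mem_isometryMonoid g
  have htrace := trace_eq_two_re_of_mem_isometryMonoid two_ne_zero hiso hdet
  obtain ⟨m, hre⟩ : ∃ m : ℤ, 1 - (mat g 0 0).re = m := by
    obtain ⟨e, he⟩ := exists_det_mat_sub_one_eq g
    refine exists_int_eq_of_eisensteinEmbedding_eq_ofReal (e := e) ?_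
    rw [det_sub_one_fin_two, hdet, htrace] at he
    push_cast
    linear_combination -he / 2
  have hsq := sq_re_le_one_of_mem_isometryMonoid two_pos three_pos hiso
  obtain rfl | rfl | rfl : m = 0 ∨ m = 1 ∨ m = 2 := by
    have hm_nonneg : 0 ≤ m := by
      have : (0 : ℝ) ≤ m := by nlinarith
      exact_mod_cast this
    have hm_le : m ≤ 2 := by
      have : (m : ℝ) ≤ 2 := by nlinarith
      exact_mod_cast this
    omega
  · left
    exact eq_one_of_mem_isometryMonoid two_pos three_pos hiso hdet (by push_cast at hre; linarith)
  · right; right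
    have hre_zero : (mat g 0 0).re = 0 := by push_cast at hre; linarith
    simp [htrace, hre_zero]
  · right; left
    rw [← neg_eq_iff_eq_neg]
    refine eq_one_of_mem_isometryMonoid two_pos three_pos (neg_mem_isometryMonoid hiso) ?_ ?_
    · simp [det_neg, hdet]
    · push_cast at hre
      simp only [Matrix.neg_apply, Complex.neg_re]
      linarith

end G4Invariants

section Coxeter

theorem eq_one_or_eq_neg_one_of_normSq_one_sub_eq {z : ℂ} (hz : ‖z‖ = 1) {m : ℤ}
    (h : normSq (1 - z) = 4 * m) : z = 1 ∨ z = -1 := by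
  have hz_sq : z.re ^ 2 + z.im ^ 2 = 1 := by
    rw [← one_pow 2, ← hz, Complex.sq_norm, normSq_apply]
    ring
  have hre : 2 - 2 * z.re = 4 * m := by
    rw [← h, normSq_apply, sub_re, sub_im, one_re, one_im]
    linear_combination -hz_sq
  obtain rfl | rfl : m = 0 ∨ m = 1 := by
    have hm_nonneg : 0 ≤ m := by
      have : (0 : ℝ) ≤ m := by linarith [normSq_nonneg (1 - z)]
      exact_mod_cast this
    have hm_le : m ≤ 1 := by
      have : (m : ℝ) ≤ 1 := by nlinarith [sq_nonneg z.im]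
      exact_mod_cast this
    omega
  · left
    have : 1 - z = 0 := by simpa using h
    exact (sub_eq_zero.1 this).symm
  · right
    have hre_eq : z.re = -1 := by push_cast at hre; linarith
    have him_eq : z.im = 0 := by simpa [hre_eq] using hz_sq
    exact Complex.ext (by simpa using hre_eq) (by simpa using him_eq)

theorem sq_sub_self_add_one_eq_zero_of_isPrimitiveRoot_six {R : Type*} [CommRing R] [IsDomain R]
    {ζ : R} (hζ : IsPrimitiveRoot ζ 6) : ζ ^ 2 - ζ + 1 = 0 := by
  simpa [Polynomial.cyclotomic_six] using hζ.isRoot_cyclotomic (by norm_num)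

theorem IsCoxeter.exists_det_eq_neg {c : G4} (hc : IsCoxeter c) :
    ∃ ζ : ℂ, IsPrimitiveRoot ζ 6 ∧ (mat c).det = -ζ ∧ (mat c).trace = ζ - 1 := by
  obtain ⟨ζ, hζ, hchar⟩ := hc
  refine ⟨ζ, hζ, ?_⟩
  rw [det_sub_smul_one_fin_two] at hchar
  have hζ_sq := sq_sub_self_add_one_eq_zero_of_isPrimitiveRoot_six hζ
  have hζ_ne : ζ ≠ 0 := hζ.ne_zero (by norm_num)
  obtain ⟨μ, hdet⟩ : ∃ μ, (mat c).det = ζ * μ := ⟨_, (mul_div_cancel₀ _ hζ_ne).symm⟩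
  have htrace : (mat c).trace = ζ + μ := mul_right_cancel₀ hζ_ne <| by
    linear_combination hdet - hchar
  have hdet_cube : (ζ * μ) ^ 3 = 1 := hdet ▸ det_mat_pow_three c
  have hμ : ‖μ‖ = 1 := Complex.norm_eq_one_of_pow_eq_one (n := 6) (by
    linear_combination ((ζ * μ) ^ 3 + 1) * hdet_cube - μ ^ 6 * hζ.pow_eq_one) (by norm_num)
  obtain ⟨e, he⟩ := exists_det_mat_sub_one_eq c
  have hnorm : normSq (1 - μ) = 4 * (QuadraticAlgebra.norm e : ℤ) := by
    have hfactor : -ζ ^ 2 * (1 - μ) = 2 * eisensteinEmbedding e := by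
      rw [← he, det_sub_one_fin_two, hdet, htrace]
      linear_combination (μ - 1) * hζ_sq
    have hζ_normSq : normSq ζ = 1 := by
      rw [normSq_eq_norm_sq, hζ.norm'_eq_one (by norm_num), one_pow]
    have hnormSq := congrArg normSq hfactor
    rw [map_mul, map_mul, normSq_neg, map_pow, hζ_normSq, normSq_eisensteinEmbedding,
      normSq_ofNat] at hnormSq
    linear_combination hnormSq
  rcases eq_one_or_eq_neg_one_of_normSq_one_sub_eq hμ hnorm with rfl | rfl
  · exact absurd (by simpa using hdet_cube) (hζ.pow_ne_one_of_pos_of_lt (by norm_num) (by norm_num))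
  · exact ⟨by rw [hdet, mul_neg_one], by rw [htrace, sub_eq_add_neg]⟩

theorem IsCoxeter.trace_mat_eq {c : G4} (hc : IsCoxeter c) :
    (mat c).trace = -(1 + (mat c).det) := by
  obtain ⟨ζ, -, hdet, htrace⟩ := hc.exists_det_eq_neg
  rw [hdet, htrace]
  ring

theorem IsCoxeter.det_mat_ne_one {c : G4} (hc : IsCoxeter c) : (mat c).det ≠ 1 := by
  obtain ⟨ζ, hζ, hdet, -⟩ := hc.exists_det_eq_neg
  rw [hdet]
  intro hζ_eq
  refine hζ.pow_ne_one_of_pos_of_lt (l := 2) (by norm_num) (by norm_num) ?_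
  rw [← neg_sq, hζ_eq, one_pow]

end Coxeter

section Reflections

variable {a b c d : G4}

theorem eq_one_of_trace_mat_eq_two {g : G4} (hdet : (mat g).det = 1) (htrace : (mat g).trace = 2) :
    g = 1 := by
  rcases mat_eq_one_or_neg_one_or_trace_eq_zero hdet with h | h | h
  · exact mat_injective h
  · norm_num [h] at htrace
  · norm_num [h] at htrace

namespace IsReflection

theorem trace_mat_eq (ha : IsReflection a) : (mat a).trace = 1 + (mat a).det := by
  linear_combination det_sub_one_fin_two (mat a) - ha.2

theorem det_mat_ne_one (ha : IsReflection a) : (mat a).det ≠ 1 := fun hdet =>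
  ha.1 <| eq_one_of_trace_mat_eq_two hdet <| by rw [ha.trace_mat_eq, hdet, one_add_one_eq_two]

theorem isCubicReflection_mat (ha : IsReflection a) : IsCubicReflection (mat a).det (mat a) where
  root := mul_left_cancel₀ (sub_ne_zero.2 ha.det_mat_ne_one) <| by
    linear_combination det_mat_pow_three a
  trace_eq := ha.trace_mat_eq
  det_eq := rfl

theorem trace_mat_ne_zero (ha : IsReflection a) : (mat a).trace ≠ 0 := fun htrace => by
  rw [ha.trace_mat_eq] at htrace
  have : (1 : ℂ) = 0 := by
    linear_combination ha.isCubicReflection_mat.root - (mat a).det * htrace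
  exact one_ne_zero this

theorem not_isCoxeter (ha : IsReflection a) : ¬ IsCoxeter a := fun hcox =>
  ha.trace_mat_ne_zero <| self_eq_neg.1 <| by
    rw [ha.trace_mat_eq, ← hcox.trace_mat_eq, ha.trace_mat_eq]

theorem mat_inv (ha : IsReflection a) : mat a⁻¹ = mat a * mat a := by
  have hinv : a⁻¹ = a * a := inv_eq_of_mul_eq_one_right <|
    mat_injective ha.isCubicReflection_mat.mul_self_mul_self
  rw [hinv, mat_mul]

theorem inv (ha : IsReflection a) : IsReflection a⁻¹ := by
  refine ⟨inv_ne_one.2 ha.1, ?_⟩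
  have hfactor : mat a⁻¹ - 1 = -mat a⁻¹ * (mat a - 1) := by
    rw [mul_sub, neg_mul, ← mat_mul, inv_mul_cancel, mat_one]
    noncomm_ring
  rw [hfactor, det_mul, ha.2, mul_zero]

theorem conj (ha : IsReflection a) (b : G4) : IsReflection (b⁻¹ * a * b) := by
  refine ⟨by simpa [mul_assoc, inv_mul_eq_one] using ha.1, ?_⟩
  have hfactor : mat (b⁻¹ * a * b) - 1 = mat b⁻¹ * (mat a - 1) * mat b := by
    rw [mul_sub, sub_mul, mul_one, ← mat_mul, ← mat_mul, ← mat_mul, inv_mul_cancel, mat_one]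
  rw [hfactor, det_mul, det_mul, ha.2, mul_zero, zero_mul]

theorem trace_mat_mul_mat_eq_det (ha : IsReflection a) (hb : IsReflection b)
    (hdet : (mat a).det = (mat b).det) (hne : a ≠ b) : (mat a * mat b).trace = (mat b).det := by
  have hcubic_a : IsCubicReflection (mat b).det (mat a) := hdet ▸ ha.isCubicReflection_mat
  have hcubic_b := hb.isCubicReflection_mat
  refine hcubic_a.trace_mul_eq hcubic_b ?_
  rw [← hb.mat_inv, ← mat_mul]
  have hquot_det : (mat (a * b⁻¹)).det = 1 := by
    rw [det_mat_mul, det_mat_inv, hdet, mul_inv_cancel₀ (det_mat_ne_zero b)]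
  rcases mat_eq_one_or_neg_one_or_trace_eq_zero hquot_det with h | h | h
  · exact absurd (mul_inv_eq_one.1 (mat_injective h)) hne
  · have hmat : mat a = -mat b := by
      rw [← inv_mul_cancel_right a b, mat_mul, h, neg_one_mul]
    have htrace : (mat b).trace = -(mat b).trace := by
      rw [← trace_neg, ← hmat, hcubic_a.trace_eq, hcubic_b.trace_eq]
    exact absurd (self_eq_neg.1 htrace) hb.trace_mat_ne_zero
  · exact h

theorem det_mat_mul_det_mat_eq_one (ha : IsReflection a) (hb : IsReflection b)
    (hne : (mat a).det ≠ (mat b).det) : (mat a).det * (mat b).det = 1 := by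
  have hsum : (mat a).det + (mat b).det + 1 = 0 :=
    mul_left_cancel₀ (sub_ne_zero.2 hne) <| by
      linear_combination ha.isCubicReflection_mat.root - hb.isCubicReflection_mat.root
  linear_combination (mat a).det * hsum - ha.isCubicReflection_mat.root

theorem det_mat_eq_or_eq_or_eq (ha : IsReflection a) (hb : IsReflection b) (hc : IsReflection c) :
    (mat a).det = (mat b).det ∨ (mat a).det = (mat c).det ∨ (mat b).det = (mat c).det := by
  by_contra! h
  obtain ⟨hab, hac, hbc⟩ := h
  exact hac <| mul_right_cancel₀ (det_mat_ne_zero b) <| by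
    rw [ha.det_mat_mul_det_mat_eq_one hb hab, hc.det_mat_mul_det_mat_eq_one hb hbc.symm]

theorem det_mat_inv_eq_of_isCoxeter (hb : IsReflection b) (hc : IsReflection c)
    (hdet : (mat a).det = (mat b).det) (hcox : IsCoxeter (a * b * c)) :
    (mat c⁻¹).det = (mat b).det := by
  have hne : (mat b).det ≠ (mat c).det := fun heq => hcox.det_mat_ne_one <| by
    rw [det_mat_mul, det_mat_mul, hdet, heq, ← det_mat_pow_three c]
    ring
  rw [det_mat_inv]
  exact inv_eq_of_mul_eq_one_left (hb.det_mat_mul_det_mat_eq_one hc hne)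

theorem mul_eq_mul_of_isCoxeter (ha : IsReflection a) (hb : IsReflection b) (hd : IsReflection d)
    (hab : (mat a).det = (mat b).det) (hdb : (mat d).det = (mat b).det) (hne : a ≠ b)
    (hcox : IsCoxeter (a * b * d⁻¹)) : d * b = a * d := by
  have hne_ad : a ≠ d := by
    rintro rfl
    exact (by simpa using hb.conj a⁻¹ : IsReflection (a * b * a⁻¹)).not_isCoxeter hcox
  have hne_bd : b ≠ d := by
    rintro rfl
    exact ha.not_isCoxeter (by simpa using hcox)
  have hdet : (mat (a * b * d⁻¹)).det = (mat b).det := by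
    rw [det_mat_mul, det_mat_mul, det_mat_inv, hab, hdb, mul_inv_cancel_right₀ (det_mat_ne_zero b)]
  have htrace := hcox.trace_mat_eq
  rw [hdet, mat_mul, mat_mul, hd.mat_inv] at htrace
  have htrace_conj : (mat (a⁻¹ * (d * b * d⁻¹))).trace = 2 := by
    simp only [mat_mul, ha.mat_inv, hd.mat_inv]
    exact IsCubicReflection.trace_mul_conj_eq_two (hab ▸ ha.isCubicReflection_mat)
      hb.isCubicReflection_mat (hdb ▸ hd.isCubicReflection_mat)
      (ha.trace_mat_mul_mat_eq_det hb hab hne)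
      (hdb ▸ ha.trace_mat_mul_mat_eq_det hd (hab.trans hdb.symm) hne_ad)
      (hdb ▸ hb.trace_mat_mul_mat_eq_det hd hdb.symm hne_bd) htrace
  have hdet_conj : (mat (a⁻¹ * (d * b * d⁻¹))).det = 1 := by
    simp only [det_mat_mul, det_mat_inv, hab, hdb]
    rw [mul_inv_cancel_right₀ (det_mat_ne_zero b), inv_mul_cancel₀ (det_mat_ne_zero b)]
  have hconj := inv_mul_eq_one.1 (eq_one_of_trace_mat_eq_two hdet_conj htrace_conj)
  exact mul_inv_eq_iff_eq_mul.1 hconj.symm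

end IsReflection

end Reflections

section Factorizations

variable {a b c : G4}

theorem hurwitzReachesPair_of_det_mat_eq (ha : IsReflection a) (hb : IsReflection b)
    (hc : IsReflection c) (hdet : (mat a).det = (mat b).det) (hcox : IsCoxeter (a * b * c)) :
    HurwitzReachesPair ![a, b, c] := by
  obtain rfl | hne := eq_or_ne a b
  · exact ⟨_, .refl _, 0, by norm_num, rfl⟩
  have hconj : c⁻¹ * b = a * c⁻¹ :=
    ha.mul_eq_mul_of_isCoxeter hb hc.inv hdet (hb.det_mat_inv_eq_of_isCoxeter hc hdet hcox) hne
      (by rwa [inv_inv])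
  exact hurwitzReachesPair_of_mul_eq_mul (by rw [inv_mul_eq_iff_eq_mul.1 hconj]; group)

theorem hurwitzReachesPair_of_isCoxeter (ha : IsReflection a) (hb : IsReflection b)
    (hc : IsReflection c) (hcox : IsCoxeter (a * b * c)) : HurwitzReachesPair ![a, b, c] := by
  rcases ha.det_mat_eq_or_eq_or_eq hb hc with hab | hac | hbc
  · exact hurwitzReachesPair_of_det_mat_eq ha hb hc hab hcox
  · exact .of_sameHurwitzOrbit (sameHurwitzOrbit_swap_right a b c) <|
      hurwitzReachesPair_of_det_mat_eq ha hc (hb.conj c) hac (by simpa [mul_assoc] using hcox)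
  · exact .of_sameHurwitzOrbit (sameHurwitzOrbit_swap_left a b c) <|
      .of_sameHurwitzOrbit (sameHurwitzOrbit_swap_right b _ c) <|
      hurwitzReachesPair_of_det_mat_eq hb hc ((ha.conj b).conj c) hbc
        (by simpa [mul_assoc] using hcox)

end Factorizations

theorem g4_length_three_pair (c : G4) (hc : IsCoxeter c) (t : Fin 3 → G4)
    (ht : ∀ i, IsReflection (t i)) (hp : (List.ofFn t).prod = c) :
    ∃ s : Fin 3 → G4, SameHurwitzOrbit t s ∧ HasConsecutiveEqualPair s := by
  have hprod : t 0 * t 1 * t 2 = c := by simp [← hp, mul_assoc]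
  have htuple : t = ![t 0, t 1, t 2] := by
    ext i
    fin_cases i <;> rfl
  rw [htuple]
  exact hurwitzReachesPair_of_isCoxeter (ht 0) (ht 1) (ht 2) (hprod ▸ hc)
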